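/- Let G be a finitely generated group and H a subgroup of finite index in G, and let K be a subgroup of H. Then the pair (G,K) is context-free if and only if the pair (H,K) is context-free. Precisely: for any semigroup presentation ψ' : Σ' → G, the language L(G,K,ψ') = { w ∈ (Σ')* : ψ'(w) ∈ K } is context-free if and only if, for any semigroup presentation ψ : Σ → H, the language L(H,K,ψ) = { w ∈ Σ* : ψ(w) ∈ K } is context-free. -/

import Mathlib

/-!
Over a convenient alphabet the two word problems are letter-to-letter rewritings of each other.
If the generators of `G` include those of `H`, the word problem of `(H, K ∩ H)` consists of the
words over the generators of `H` in the word problem of `(G, K)`. Conversely, let `t` be a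
transversal of `G ⧸ H` and let the generators of `H` include all the Schreier elements
`(t p)⁻¹ * a * t q ∈ H`, with `a` a generator of `G`. Replacing the letters of a word `w` over the
generators of `G` by Schreier elements along a path of cosets from `p` to `q` gives a word with
value `(t p)⁻¹ * w * t q`. If `t` takes values in `K` on the cosets that meet `K`, then `w ∈ K` iff
the rewriting from the coset `H` ends in such a coset and its value lies in `K ∩ H`.

Context-free languages are closed under such finite-state rewriting by the Bar-Hillel triple
construction: a nonterminal `(p, X, q)` generates what the transducer can write while reading a word
generated by `X` and moving from `p` to `q`.
-/

/-- A nondeterministic letter-to-letter transducer with states `σ`, given by its transition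
relation: `τ p a b q` means that in state `p` it can read `a`, write `b` and move to state `q`. -/
abbrev Transducer (σ α β : Type*) := σ → α → β → σ → Prop

namespace Transducer

variable {σ α β : Type*} {τ : Transducer σ α β} {p q r : σ} {a : α} {b : β}
  {u u₁ u₂ : List α} {v v₁ v₂ : List β}

/-- `τ.Run p u v q` means that `τ` can move from state `p` to state `q` while reading `u` and
writing `v`. -/
inductive Run (τ : Transducer σ α β) : σ → List α → List β → σ → Prop
  | nil (p : σ) : Run τ p [] [] p
  | cons {p q r : σ} {a : α} {b : β} {u : List α} {v : List β} :
      τ p a b q → Run τ q u v r → Run τ p (a :: u) (b :: v) r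

/-- The words that `τ` can write while reading a word of `L` and moving from the initial state `p`
to an accepting state in `F`. -/
def image (τ : Transducer σ α β) (p : σ) (F : Set σ) (L : Language α) : Language β :=
  {v | ∃ u ∈ L, ∃ q ∈ F, τ.Run p u v q}

theorem run_singleton_iff : τ.Run p [a] [b] q ↔ τ p a b q := by
  constructor
  · rintro (_ | ⟨h, ⟨⟩⟩)
    exact h
  · exact fun h => .cons h (.nil q)

theorem Run.append (h₁ : τ.Run p u₁ v₁ q) (h₂ : τ.Run q u₂ v₂ r) :
    τ.Run p (u₁ ++ u₂) (v₁ ++ v₂) r := by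
  induction h₁ with
  | nil => exact h₂
  | cons h _ ih => exact .cons h (ih h₂)

theorem Run.swap (h : τ.Run p u v q) : Run (fun p b a q => τ p a b q) p v u q := by
  induction h with
  | nil p => exact .nil p
  | cons h _ ih => exact .cons h ih

theorem Run.exists_of_append_left (h : τ.Run p (u₁ ++ u₂) v r) :
    ∃ v₁ v₂ q, v = v₁ ++ v₂ ∧ τ.Run p u₁ v₁ q ∧ τ.Run q u₂ v₂ r := by
  induction u₁ generalizing p v with
  | nil => exact ⟨[], v, p, rfl, .nil p, h⟩
  | cons a u₁ ih =>
    obtain _ | ⟨hstep, hrun⟩ := h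
    obtain ⟨v₁, v₂, q, rfl, h₁, h₂⟩ := ih hrun
    exact ⟨_ :: v₁, v₂, q, rfl, .cons hstep h₁, h₂⟩

theorem Run.exists_of_append_right (h : τ.Run p u (v₁ ++ v₂) r) :
    ∃ u₁ u₂ q, u = u₁ ++ u₂ ∧ τ.Run p u₁ v₁ q ∧ τ.Run q u₂ v₂ r := by
  obtain ⟨u₁, u₂, q, hu, h₁, h₂⟩ := h.swap.exists_of_append_left
  exact ⟨u₁, u₂, q, hu, h₁.swap, h₂.swap⟩

theorem finite_setOf_run (hτ : ∀ p a, {x : β × σ | τ p a x.1 x.2}.Finite) (p : σ) (u : List α) :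
    {x : List β × σ | τ.Run p u x.1 x.2}.Finite := by
  induction u generalizing p with
  | nil =>
    refine (Set.finite_singleton ([], p)).subset ?_
    rintro ⟨_, _⟩ ⟨⟩
    rfl
  | cons a u ih =>
    refine ((hτ p a).biUnion fun x _ =>
      (ih x.2).image fun y => (x.1 :: y.1, y.2)).subset ?_
    rintro ⟨_, _⟩ (_ | ⟨hstep, hrun⟩)
    exact Set.mem_biUnion (x := (_, _)) hstep ⟨(_, _), hrun, rfl⟩

theorem exists_run_of_forall_exists (hτ : ∀ p b, ∃ a q, τ p a b q) (p : σ) (v : List β) :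
    ∃ u q, τ.Run p u v q := by
  induction v generalizing p with
  | nil => exact ⟨[], p, .nil p⟩
  | cons b v ih =>
    obtain ⟨a, q, hstep⟩ := hτ p b
    obtain ⟨u, r, hrun⟩ := ih q
    exact ⟨a :: u, r, .cons hstep hrun⟩

/-! ### The triple construction -/

/-- The transducer on sentential forms induced by `τ`: terminals are rewritten by `τ`, and a
nonterminal `X` is annotated with the states between which the word it generates will be read.
The nonterminal `none` is never written; it is reserved for the start symbol of
`Transducer.grammar`. -/
inductive OnSymbols (N : Type*) (τ : Transducer σ α β) :
    Transducer σ (Symbol α N) (Symbol β (Option (σ × N × σ)))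
  | terminal {p q : σ} {a : α} {b : β} : τ p a b q → OnSymbols N τ p (.terminal a) (.terminal b) q
  | nonterminal (p : σ) (X : N) (q : σ) :
      OnSymbols N τ p (.nonterminal X) (.nonterminal (some (p, X, q))) q

theorem Run.onSymbols (N : Type*) (h : τ.Run p u v q) :
    (τ.OnSymbols N).Run p (u.map .terminal) (v.map .terminal) q := by
  induction h with
  | nil p => exact .nil p
  | cons h _ ih => exact .cons (.terminal h) ih

theorem Run.exists_of_onSymbols_map_terminal {N : Type*} {s : List (Symbol α N)}
    (h : (τ.OnSymbols N).Run p s (v.map .terminal) q) :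
    ∃ u, s = u.map .terminal ∧ τ.Run p u v q := by
  induction v generalizing p s with
  | nil =>
    cases h
    exact ⟨[], rfl, .nil _⟩
  | cons b v ih =>
    obtain _ | ⟨⟨hstep⟩, hrun⟩ := h
    obtain ⟨u, rfl, hu⟩ := ih hrun
    exact ⟨_ :: u, rfl, .cons hstep hu⟩

theorem finite_setOf_onSymbols [Finite σ] [Finite β] {N : Type*} (p : σ) (X : Symbol α N) :
    {x : Symbol β (Option (σ × N × σ)) × σ | τ.OnSymbols N p X x.1 x.2}.Finite := by
  cases X with
  | terminal a =>
    refine (Set.finite_range fun x : β × σ => (Symbol.terminal x.1, x.2)).subset ?_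
    rintro ⟨_, q⟩ (⟨_⟩ : OnSymbols N τ p _ _ q)
    exact ⟨(_, q), rfl⟩
  | nonterminal X =>
    refine (Set.finite_range fun q : σ => (Symbol.nonterminal (some (p, X, q)), q)).subset ?_
    rintro ⟨_, q⟩ (⟨_⟩ : OnSymbols N τ p _ _ q)
    exact ⟨q, rfl⟩

section Grammar

variable {σ : Type} {τ : Transducer σ α β} {g : ContextFreeGrammar α} {p₀ p q : σ} {F : Set σ}

/-- The rules of `Transducer.grammar`: the rules of `g` annotated along the runs of `τ`, and one
start rule for each accepting state. -/
inductive IsTripleRule (τ : Transducer σ α β) (p₀ : σ) (F : Set σ) (g : ContextFreeGrammar α) :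
    ContextFreeRule β (Option (σ × g.NT × σ)) → Prop
  | start {q : σ} : q ∈ F → IsTripleRule τ p₀ F g ⟨none, [.nonterminal (some (p₀, g.initial, q))]⟩
  | annotate {r : ContextFreeRule α g.NT} {p q : σ} {s : List (Symbol β (Option (σ × g.NT × σ)))} :
      r ∈ g.rules → (τ.OnSymbols g.NT).Run p r.output s q →
      IsTripleRule τ p₀ F g ⟨some (p, r.input, q), s⟩

theorem finite_setOf_isTripleRule [Finite σ] [Finite β] (τ : Transducer σ α β) (p₀ : σ)
    (F : Set σ) (g : ContextFreeGrammar α) : {r | τ.IsTripleRule p₀ F g r}.Finite := by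
  have hstart := Set.finite_range fun q : σ =>
    (⟨none, [.nonterminal (some (p₀, g.initial, q))]⟩ :
      ContextFreeRule β (Option (σ × g.NT × σ)))
  have hannotate := g.rules.finite_toSet.biUnion fun r _ => Set.finite_iUnion fun p : σ =>
    (finite_setOf_run (τ := τ.OnSymbols g.NT) finite_setOf_onSymbols p r.output).image fun x =>
      (⟨some (p, r.input, x.2), x.1⟩ : ContextFreeRule β (Option (σ × g.NT × σ)))
  refine (hstart.union hannotate).subset ?_
  rintro _ (@⟨q, _⟩ | @⟨r, p, q, s, hr, hrun⟩)
  · exact .inl ⟨q, rfl⟩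
  · exact .inr (Set.mem_biUnion hr (Set.mem_iUnion_of_mem p ⟨(s, q), hrun, rfl⟩))

/-- The grammar of triples `(p, X, q)` generating `τ.image p₀ F g.language`. -/
noncomputable def grammar [Finite σ] [Finite β] (τ : Transducer σ α β) (p₀ : σ) (F : Set σ)
    (g : ContextFreeGrammar α) : ContextFreeGrammar β where
  NT := Option (σ × g.NT × σ)
  initial := none
  rules := (finite_setOf_isTripleRule τ p₀ F g).toFinset

variable [Finite σ] [Finite β] {s t : List (Symbol α g.NT)}
  {s' t' : List (Symbol β (Option (σ × g.NT × σ)))}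

theorem mem_rules_grammar {r : ContextFreeRule β (Option (σ × g.NT × σ))} :
    r ∈ (τ.grammar p₀ F g).rules ↔ τ.IsTripleRule p₀ F g r :=
  Set.Finite.mem_toFinset _

theorem Run.exists_produces_grammar (hrun : (τ.OnSymbols g.NT).Run p t t' q)
    (h : g.Produces s t) :
    ∃ s', (τ.OnSymbols g.NT).Run p s s' q ∧ (τ.grammar p₀ F g).Produces s' t' := by
  obtain ⟨r, hr, hrw⟩ := h
  obtain ⟨l, m, rfl, rfl⟩ := hrw.exists_parts
  obtain ⟨_, m', q₂, rfl, hlr, hm⟩ := hrun.exists_of_append_left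
  obtain ⟨l', o', q₁, rfl, hl, ho⟩ := hlr.exists_of_append_left
  have hinput := run_singleton_iff.2 (OnSymbols.nonterminal (τ := τ) q₁ r.input q₂)
  exact ⟨_, (hl.append hinput).append hm, _, mem_rules_grammar.2 (.annotate hr ho),
    ContextFreeRule.rewrites_of_exists_parts _ l' m'⟩

theorem Run.exists_produces_of_grammar (hrun : (τ.OnSymbols g.NT).Run p s s' q)
    (h : (τ.grammar p₀ F g).Produces s' t') :
    ∃ t, (τ.OnSymbols g.NT).Run p t t' q ∧ g.Produces s t := by
  obtain ⟨r', hr', hrw⟩ := h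
  obtain ⟨l', m', rfl, rfl⟩ := hrw.exists_parts
  obtain ⟨_, m, q₂, rfl, hlr, hm⟩ := hrun.exists_of_append_right
  obtain ⟨l, _, q₁, rfl, hl, hinput⟩ := hlr.exists_of_append_right
  obtain _ | ⟨hstep, ⟨⟩⟩ := hinput
  obtain _ | ⟨hr, ho⟩ := mem_rules_grammar.1 hr'
  · cases hstep
  · cases hstep
    exact ⟨_, (hl.append ho).append hm, _, hr, ContextFreeRule.rewrites_of_exists_parts _ l m⟩

theorem Run.exists_derives_grammar (hrun : (τ.OnSymbols g.NT).Run p t t' q) (h : g.Derives s t) :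
    ∃ s', (τ.OnSymbols g.NT).Run p s s' q ∧ (τ.grammar p₀ F g).Derives s' t' := by
  induction h using Relation.ReflTransGen.head_induction_on with
  | refl => exact ⟨t', hrun, .refl _⟩
  | head hprod _ ih =>
    obtain ⟨_, hrun', hder⟩ := ih
    obtain ⟨s', hs', hprod'⟩ := hrun'.exists_produces_grammar hprod
    exact ⟨s', hs', hprod'.trans_derives hder⟩

theorem Run.exists_derives_of_grammar (hrun : (τ.OnSymbols g.NT).Run p s s' q)
    (h : (τ.grammar p₀ F g).Derives s' t') :
    ∃ t, (τ.OnSymbols g.NT).Run p t t' q ∧ g.Derives s t := by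
  induction h with
  | refl => exact ⟨s, hrun, .refl _⟩
  | tail _ hprod ih =>
    obtain ⟨_, hrun', hder⟩ := ih
    obtain ⟨t, ht, hprod'⟩ := hrun'.exists_produces_of_grammar hprod
    exact ⟨t, ht, hder.trans_produces hprod'⟩

theorem produces_grammar_initial_iff :
    (τ.grammar p₀ F g).Produces [.nonterminal none] s' ↔
      ∃ q ∈ F, s' = [.nonterminal (some (p₀, g.initial, q))] := by
  constructor
  · rintro ⟨r, hr, hrw⟩
    obtain ⟨hq⟩ | _ := mem_rules_grammar.1 hr
    · cases hrw with
      | head => exact ⟨_, hq, rfl⟩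
      | cons _ h => cases h
    · cases hrw with
      | cons _ h => cases h
  · rintro ⟨q, hq, rfl⟩
    exact ⟨_, mem_rules_grammar.2 (.start hq), .input_output⟩

theorem language_grammar : (τ.grammar p₀ F g).language = τ.image p₀ F g.language := by
  ext v
  constructor
  · intro hv
    obtain hv | ⟨s', hstart, hder⟩ := ContextFreeGrammar.Derives.eq_or_head hv
    · cases v <;> cases hv
    · obtain ⟨q, hq, rfl⟩ := produces_grammar_initial_iff.1 hstart
      obtain ⟨_, hrun, hder'⟩ :=
        (run_singleton_iff.2 (.nonterminal p₀ g.initial q)).exists_derives_of_grammar hder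
      obtain ⟨u, rfl, hu⟩ := hrun.exists_of_onSymbols_map_terminal
      exact ⟨u, hder', q, hq, hu⟩
  · rintro ⟨u, hu, q, hq, hrun⟩
    obtain ⟨s', hs', hder⟩ := (hrun.onSymbols g.NT).exists_derives_grammar hu
    obtain _ | ⟨⟨⟩, ⟨⟩⟩ := hs'
    exact (produces_grammar_initial_iff.2 ⟨q, hq, rfl⟩).trans_derives hder

end Grammar

end Transducer

/-! ### Closure properties of context-free languages -/

theorem isContextFree_image_transducer {α β : Type*} {σ : Type} [Finite σ] [Finite β]
    (τ : Transducer σ α β) (p : σ) (F : Set σ) {L : Language α} (hL : L.IsContextFree) :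
    (τ.image p F L).IsContextFree := by
  obtain ⟨g, rfl⟩ := hL
  exact ⟨τ.grammar p F g, Transducer.language_grammar⟩

theorem isContextFree_of_forall_mem_iff_map_mem {α β : Type*} [Finite β] {L : Language α}
    {L' : Language β} (f : β → α) (hf : ∀ w, w ∈ L' ↔ w.map f ∈ L) (hL : L.IsContextFree) :
    L'.IsContextFree := by
  let τ : Transducer Unit α β := fun _ a b _ => f b = a
  have run_map (w : List β) : τ.Run () (w.map f) w () := by
    induction w with
    | nil => exact .nil ()
    | cons b w ih => exact .cons rfl ih
  have map_eq_of_run {p q u w} (h : τ.Run p u w q) : w.map f = u := by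
    induction h with
    | nil => rfl
    | cons h _ ih => exact congrArg₂ List.cons h ih
  have eq_image : L' = τ.image () Set.univ L := by
    ext w
    rw [hf]
    constructor
    · exact fun hw => ⟨_, hw, (), trivial, run_map w⟩
    · rintro ⟨u, hu, q, -, hrun⟩
      rwa [map_eq_of_run hrun]
  rw [eq_image]
  exact isContextFree_image_transducer τ () Set.univ hL

/-! ### Word problems -/

/-- A map from an alphabet to a monoid is a semigroup presentation if every element of the monoid is
the value of some word. -/
def IsSemigroupPresentation {M α : Type*} [Monoid M] (ψ : α → M) : Prop :=
  ∀ g : M, ∃ w : List α, (w.map ψ).prod = g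

/-- The word problem `L(G, K, ψ)`: the words whose value lies in `K`. -/
def wordProblem {G α : Type*} [Group G] (K : Subgroup G) (ψ : α → G) : Language α :=
  {w | (w.map ψ).prod ∈ K}

/-- The pair `(G, K)` is context-free if its word problem is context-free with respect to every
semigroup presentation of `G`. Alphabets are finite, so taking them in `Type` loses nothing when `G`
lives in a higher universe. -/
def IsContextFreePair {G : Type*} [Group G] (K : Subgroup G) : Prop :=
  ∀ (α : Type) (_ : Fintype α) (ψ : α → G),
    IsSemigroupPresentation ψ → (wordProblem K ψ).IsContextFree

theorem exists_isSemigroupPresentation_subset_range {M : Type*} [Monoid M] [Monoid.FG M]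
    {s : Set M} (hs : s.Finite) :
    ∃ (n : ℕ) (ψ : Fin n → M), IsSemigroupPresentation ψ ∧ s ⊆ Set.range ψ := by
  obtain ⟨S, hS⟩ := Monoid.fg_def.1 ‹Monoid.FG M›
  obtain ⟨n, ψ, -, hψ⟩ := (hs.union S.finite_toSet).fin_param
  refine ⟨n, ψ, fun g => ?_, hψ ▸ Set.subset_union_left⟩
  have hclosure : Submonoid.closure (Set.range ψ) = ⊤ := by
    rw [hψ, eq_top_iff, ← hS]
    exact Submonoid.closure_mono Set.subset_union_right
  obtain ⟨w, hw⟩ : g ∈ MonoidHom.mrange (FreeMonoid.lift ψ) := by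
    rw [FreeMonoid.mrange_lift, hclosure]
    trivial
  exact ⟨w.toList, (FreeMonoid.lift_apply ψ w).symm.trans hw⟩

/-- The transducer on a family `t` of coset representatives that reads `b` and writes `a` on moving
from `p` to `q` if `ψ b` is the Schreier element `(t p)⁻¹ * φ a * t q`. -/
def schreierTransducer {M σ α β : Type*} [Monoid M] (t : σ → M) (ψ : β → M) (φ : α → M) :
    Transducer σ β α :=
  fun p b a q => t p * ψ b = φ a * t q

theorem mul_prod_eq_of_run_schreierTransducer {M σ α β : Type*} [Monoid M] {t : σ → M} {ψ : β → M}
    {φ : α → M} {p q : σ} {u : List β} {w : List α}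
    (h : (schreierTransducer t ψ φ).Run p u w q) :
    t p * (u.map ψ).prod = (w.map φ).prod * t q := by
  induction h with
  | nil p => simp
  | cons hstep _ ih =>
    simp only [List.map_cons, List.prod_cons]
    rw [← mul_assoc, hstep, mul_assoc, ih, mul_assoc]

section Subgroup

variable {G : Type*} [Group G] {H K : Subgroup G}

theorem mem_wordProblem {α : Type*} {ψ : α → G} {w : List α} :
    w ∈ wordProblem K ψ ↔ (w.map ψ).prod ∈ K :=
  Iff.rfl

theorem mem_wordProblem_subgroupOf {β : Type*} {ψ : β → H} {w : List β} :
    w ∈ wordProblem (K.subgroupOf H) ψ ↔ (w.map fun b => (ψ b : G)).prod ∈ K := by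
  rw [mem_wordProblem, Subgroup.mem_subgroupOf, Subgroup.val_list_prod, List.map_map,
    Function.comp_def]

theorem IsContextFreePair.subgroupOf [Group.FG G] (hK : IsContextFreePair K) :
    IsContextFreePair (K.subgroupOf H) := by
  intro β _ ψ _
  obtain ⟨n, φ, hφ, hrange⟩ := exists_isSemigroupPresentation_subset_range
    (Set.finite_range fun b => (ψ b : G))
  choose f hf using fun b => hrange (Set.mem_range_self b)
  refine isContextFree_of_forall_mem_iff_map_mem f (fun w => ?_) (hK _ inferInstance φ hφ)
  rw [mem_wordProblem_subgroupOf, mem_wordProblem, List.map_map, Function.comp_def]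
  simp only [hf]

variable (H K) in
theorem exists_transversal_mem [H.FiniteIndex] :
    ∃ (n : ℕ) (t : Fin n → G), (∀ g, ∃ i, g⁻¹ * t i ∈ H) ∧
      ∀ i, ∀ k ∈ K, k⁻¹ * t i ∈ H → t i ∈ K := by
  obtain ⟨n, ⟨e⟩⟩ := Finite.exists_equiv_fin (G ⧸ H)
  have hrep (c : G ⧸ H) : ∃ g : G, (g : G ⧸ H) = c ∧ ∀ k ∈ K, (k : G ⧸ H) = c → g ∈ K := by
    by_cases hc : ∃ k ∈ K, (k : G ⧸ H) = c
    · obtain ⟨k, hk, hkc⟩ := hc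
      exact ⟨k, hkc, fun _ _ _ => hk⟩
    · exact ⟨c.out, c.out_eq', fun k hk hkc => (hc ⟨k, hk, hkc⟩).elim⟩
  choose t ht htK using hrep
  refine ⟨n, t ∘ e.symm, fun g => ⟨e g, ?_⟩, fun i k hk hki => htK _ k hk ?_⟩
  · rw [← QuotientGroup.eq, Function.comp_apply, ht, e.symm_apply_apply]
  · rwa [← QuotientGroup.eq, Function.comp_apply, ht] at hki

theorem wordProblem_eq_image_schreierTransducer {σ α β : Type*} {t : σ → G}
    {ψ : β → H} {φ : α → G} (htK : ∀ i, ∀ k ∈ K, k⁻¹ * t i ∈ H → t i ∈ K)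
    (htotal : ∀ p a, ∃ b q, schreierTransducer t (fun b => (ψ b : G)) φ p b a q)
    {i : σ} (hi : t i ∈ K) :
    wordProblem K φ = (schreierTransducer t (fun b => (ψ b : G)) φ).image i {q | t q ∈ K}
      (wordProblem (K.subgroupOf H) ψ) := by
  ext w
  constructor
  · intro (hw : (w.map φ).prod ∈ K)
    obtain ⟨u, q, hrun⟩ := Transducer.exists_run_of_forall_exists htotal i w
    have hvalue := mul_prod_eq_of_run_schreierTransducer hrun
    have hu : (u.map fun b => (ψ b : G)).prod = ((w.map φ).prod⁻¹ * t i)⁻¹ * t q := by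
      rw [mul_inv_rev, inv_inv, mul_assoc, ← hvalue, inv_mul_cancel_left]
    have hq : t q ∈ K := by
      refine htK q _ (K.mul_mem (K.inv_mem hw) hi) ?_
      rw [← hu]
      exact H.list_prod_mem (by simp)
    refine ⟨u, mem_wordProblem_subgroupOf.2 ?_, q, hq, hrun⟩
    rw [← K.mul_mem_cancel_left hi, hvalue]
    exact K.mul_mem hw hq
  · rintro ⟨u, hu, q, hq, hrun⟩
    rw [mem_wordProblem, ← K.mul_mem_cancel_right hq, ← mul_prod_eq_of_run_schreierTransducer hrun]
    exact K.mul_mem hi (mem_wordProblem_subgroupOf.1 hu)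

theorem IsContextFreePair.of_subgroupOf [Group.FG H] [H.FiniteIndex]
    (hK : IsContextFreePair (K.subgroupOf H)) : IsContextFreePair K := by
  intro α _ φ _
  obtain ⟨n, t, ht, htK⟩ := exists_transversal_mem H K
  obtain ⟨m, ψ, hψ, hrange⟩ := exists_isSemigroupPresentation_subset_range
    ((Set.finite_range fun x : Fin n × α × Fin n => (t x.1)⁻¹ * φ x.2.1 * t x.2.2).preimage
      (Subtype.val_injective (p := (· ∈ H))).injOn)
  have htotal (p : Fin n) (a : α) :
      ∃ b q, schreierTransducer t (fun b => (ψ b : G)) φ p b a q := by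
    obtain ⟨q, hq⟩ := ht ((φ a)⁻¹ * t p)
    have hmem : (t p)⁻¹ * φ a * t q ∈ H := by simpa using hq
    obtain ⟨b, hb⟩ := hrange (a := ⟨_, hmem⟩) ⟨(p, a, q), rfl⟩
    refine ⟨b, q, ?_⟩
    simp [schreierTransducer, hb, mul_assoc]
  obtain ⟨i, hi⟩ := ht 1
  rw [wordProblem_eq_image_schreierTransducer htK htotal (htK i 1 K.one_mem hi)]
  exact isContextFree_image_transducer _ _ _ (hK _ inferInstance ψ hψ)

variable (H K) in
theorem contextFree_pair_iff_of_finiteIndex_general [Group.FG G] [H.FiniteIndex] :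
    IsContextFreePair K ↔ IsContextFreePair (K.subgroupOf H) :=
  ⟨.subgroupOf, .of_subgroupOf⟩

end Subgroup

/-- Let `H` be a finite-index subgroup of a finitely generated group `G`
and `K ≤ H`. Then `(G,K)` is context-free iff `(H,K)` is context-free, where each pair is
context-free iff its word problem is context-free for any semigroup presentation. -/
theorem contextFree_pair_iff_of_finiteIndex
    {G : Type} [Group G] [Group.FG G] (H : Subgroup G) [H.FiniteIndex]
    (K : Subgroup G) (hKH : K ≤ H) :
    (∀ (α : Type) (_ : Fintype α) (ψ : α → G),
        (∀ g : G, ∃ w : List α, (w.map ψ).prod = g) →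
        Language.IsContextFree {w : List α | (w.map ψ).prod ∈ K}) ↔
    (∀ (β : Type) (_ : Fintype β) (ψ : β → H),
        (∀ h : H, ∃ w : List β, (w.map ψ).prod = h) →
        Language.IsContextFree {w : List β | ((w.map ψ).prod : G) ∈ K}) :=
  contextFree_pair_iff_of_finiteIndex_general H K
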